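/- arXiv:1609.03182 — 2 statements merged into one kernel-verified Lean document; each statement's English description precedes it below -/
import Mathlib

section
/- Fix μ > 2ν > 0 and K > 0. There exists L_0 (depending only on μ, ν, K) such that for all L ≥ L_0, all x ≥ 1, all n ≥ 0, and all positive reals a_1,…,a_{n+1}, reals b̲_1,…,b̲_{n+1} and z' with z' ≥ min(ν,1)·1 (i.e. z' > ν) satisfying: (i) S_j := Σ_{i=1}^j log a_i ∈ (−j(μ+ν) − K, −j(μ−ν) + K) for all j ≤ n; (ii) |b̲_j| ≤ e^{νj + K} for all j ≤ n; (iii) b̲_{n+1} ≥ −x e^{n(μ−ν) − K}; and (iv) max(a_{n+1}, b̲_{n+1}) > x e^{n(μ+ν) + L + K}; one has Σ_{k=0}^{n−1} b̲_{k+1} Π_{j=1}^{k} a_j + ( b̲_{n+1} + z' a_{n+1} ) Π_{j=1}^{n} a_j > x. -/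
open Real

/- The envelope squeezes the partial products `∏_{j ≤ k} a_j` between two decaying exponentials.
As the `|b_k|` grow more slowly than the upper one decays, the first `n` terms are dominated by a
geometric series and contribute at least `-C`, with `C` independent of `n`. In the last term the
exponential factors in `n` cancel: if `z ≥ δ > 0`, whichever of `a_{n+1}`, `b_{n+1}` is large
contributes at least `min δ 1 * x * exp L`, and a negative `b_{n+1}` costs at most `x`. Since
`x ≥ 1`, it suffices that `min δ 1 * exp L ≥ C + 2`. -/

theorem norm_sum_range_le_of_norm_le_geometric {E : Type*} [SeminormedAddCommGroup E]
    {f : ℕ → E} {C r : ℝ} {n : ℕ} (hC : 0 ≤ C) (hr0 : 0 ≤ r) (hr1 : r < 1)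
    (hf : ∀ k < n, ‖f k‖ ≤ C * r ^ k) :
    ‖∑ k ∈ Finset.range n, f k‖ ≤ C / (1 - r) := by
  have geom_le : ∑ k ∈ Finset.range n, r ^ k ≤ (1 - r)⁻¹ :=
    sum_le_hasSum _ (fun k _ ↦ pow_nonneg hr0 k) (hasSum_geometric_of_lt_one hr0 hr1)
  calc ‖∑ k ∈ Finset.range n, f k‖
      ≤ ∑ k ∈ Finset.range n, C * r ^ k :=
        norm_sum_le_of_le _ fun k hk ↦ hf k (Finset.mem_range.1 hk)
    _ = C * ∑ k ∈ Finset.range n, r ^ k := (Finset.mul_sum ..).symm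
    _ ≤ C / (1 - r) := mul_le_mul_of_nonneg_left geom_le hC

theorem norm_sum_range_mul_le_of_norm_le_exp {R : Type*} [NonUnitalSeminormedRing R]
    {b p : ℕ → R} {β γ c d : ℝ} {n : ℕ} (hγβ : γ < β)
    (hb : ∀ k < n, ‖b k‖ ≤ exp (γ * k + c)) (hp : ∀ k < n, ‖p k‖ ≤ exp (-(k * β) + d)) :
    ‖∑ k ∈ Finset.range n, b k * p k‖ ≤ exp (c + d) / (1 - exp (γ - β)) := by
  refine norm_sum_range_le_of_norm_le_geometric (exp_pos _).le (exp_pos _).le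
    (exp_lt_one_iff.2 (sub_neg.2 hγβ)) fun k hk ↦ ?_
  calc ‖b k * p k‖
      ≤ ‖b k‖ * ‖p k‖ := norm_mul_le _ _
    _ ≤ exp (γ * k + c) * exp (-(k * β) + d) := by
        gcongr
        exacts [hb k hk, hp k hk]
    _ = exp (c + d) * exp (γ - β) ^ k := by
        rw [← exp_nat_mul, ← exp_add, ← exp_add]
        ring_nf

theorem prod_mem_Icc_exp_iff {ι : Type*} {s : Finset ι} {f : ι → ℝ} {l u : ℝ}
    (hf : ∀ i ∈ s, 0 < f i) :
    ∏ i ∈ s, f i ∈ Set.Icc (exp l) (exp u) ↔ ∑ i ∈ s, log (f i) ∈ Set.Icc l u := by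
  have prod_pos := Finset.prod_pos hf
  rw [← log_prod fun i hi ↦ (hf i hi).ne', Set.mem_Icc, Set.mem_Icc,
    le_log_iff_exp_le prod_pos, log_le_iff_le_exp prod_pos]

theorem prod_Icc_one_mem_Icc_exp {a : ℕ → ℝ} {α β K : ℝ} {n : ℕ} (hK : 0 ≤ K)
    (ha : ∀ i, 1 ≤ i → i ≤ n → 0 < a i)
    (hS : 1 ≤ n → ∑ i ∈ Finset.Icc 1 n, log (a i) ∈ Set.Icc (-(n * α) - K) (-(n * β) + K)) :
    ∏ i ∈ Finset.Icc 1 n, a i ∈ Set.Icc (exp (-(n * α) - K)) (exp (-(n * β) + K)) := by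
  rw [prod_mem_Icc_exp_iff fun i hi ↦ ha i (Finset.mem_Icc.1 hi).1 (Finset.mem_Icc.1 hi).2]
  rcases n.eq_zero_or_pos with rfl | hn
  · simp [hK]
  · exact hS hn

theorem mul_max_sub_le_add_mul {R : Type*} [CommRing R] [LinearOrder R] [IsStrictOrderedRing R]
    {a b x z δ : R} (hδ0 : 0 ≤ δ) (hδ1 : δ ≤ 1) (hδz : δ ≤ z) (ha : 0 ≤ a) (hx : 0 ≤ x)
    (hb : -x ≤ b) : δ * max a b - x ≤ b + z * a := by
  rcases max_choice a b with h | h <;> rw [h]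
  · linarith [mul_le_mul_of_nonneg_right hδz ha]
  · have b_add_x : δ * (b + x) ≤ b + x := mul_le_of_le_one_left (by linarith) hδ1
    linarith [mul_nonneg hδ0 hx, mul_nonneg (hδ0.trans hδz) ha]

theorem mul_exp_sub_lt_add_mul_mul {a b p x z δ s t L K : ℝ}
    (hδ0 : 0 < δ) (hδ1 : δ ≤ 1) (hδz : δ ≤ z) (ha : 0 ≤ a) (hx : 0 ≤ x)
    (hp : p ∈ Set.Icc (exp (-s - K)) (exp (-t + K)))
    (hb : -x * exp (t - K) ≤ b) (hmax : x * exp (s + L + K) < max a b) :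
    δ * (x * exp L) - x < (b + z * a) * p := by
  have p_pos : 0 < p := (exp_pos _).trans_le hp.1
  have bp_ge : -x ≤ b * p := calc
    -x = -(x * (exp (t - K) * exp (-t + K))) := by
        rw [← exp_add, show t - K + (-t + K) = 0 by ring, exp_zero, mul_one]
    _ ≤ -(x * (exp (t - K) * p)) := by
        gcongr
        exact hp.2
    _ = -x * exp (t - K) * p := by ring
    _ ≤ b * p := by gcongr
  have max_gt : x * exp L < max (a * p) (b * p) := calc
    x * exp L = x * exp (s + L + K) * exp (-s - K) := by
        rw [mul_assoc, ← exp_add]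
        ring_nf
    _ ≤ x * exp (s + L + K) * p := by
        gcongr
        exact hp.1
    _ < max a b * p := by gcongr
    _ = max (a * p) (b * p) := max_mul_of_nonneg _ _ p_pos.le
  calc δ * (x * exp L) - x
      < δ * max (a * p) (b * p) - x := by gcongr
    _ ≤ b * p + z * (a * p) :=
        mul_max_sub_le_add_mul hδ0.le hδ1 hδz (mul_nonneg ha p_pos.le) hx bp_ge
    _ = (b + z * a) * p := by ring

theorem stmt13_general (α β γ δ K : ℝ) (hγβ : γ < β) (hδ : 0 < δ) (hK : 0 ≤ K) :
    ∃ L₀ : ℝ, ∀ L : ℝ, L₀ ≤ L → ∀ x : ℝ, 1 ≤ x → ∀ n : ℕ,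
      ∀ a b : ℕ → ℝ, ∀ z : ℝ,
      (∀ i : ℕ, 1 ≤ i → i ≤ n + 1 → 0 < a i) →
      δ ≤ z →
      (∀ j : ℕ, 1 ≤ j → j ≤ n →
        ∑ i ∈ Finset.Icc 1 j, log (a i) ∈ Set.Icc (-(j * α) - K) (-(j * β) + K)) →
      (∀ j : ℕ, 1 ≤ j → j ≤ n → |b j| ≤ exp (γ * j + K)) →
      -x * exp (n * β - K) ≤ b (n + 1) →
      x * exp (n * α + L + K) < max (a (n + 1)) (b (n + 1)) →
      x < (∑ k ∈ Finset.range n, b (k + 1) * ∏ j ∈ Finset.Icc 1 k, a j)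
          + (b (n + 1) + z * a (n + 1)) * ∏ j ∈ Finset.Icc 1 n, a j := by
  let C := exp (γ + K + K) / (1 - exp (γ - β))
  have C_nonneg : 0 ≤ C := div_nonneg (exp_pos _).le (by simpa using hγβ.le)
  have min_pos : 0 < min δ 1 := lt_min hδ one_pos
  refine ⟨log ((C + 2) / min δ 1), fun L hL x hx n a b z ha hz hS hb hb_last hmax ↦ ?_⟩
  have exp_L_ge : C + 2 ≤ min δ 1 * exp L :=
    (div_le_iff₀' min_pos).1 ((log_le_iff_le_exp (by positivity)).1 hL)
  have prod_mem (k : ℕ) (hk : k ≤ n) : ∏ j ∈ Finset.Icc 1 k, a j ∈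
      Set.Icc (exp (-(k * α) - K)) (exp (-(k * β) + K)) :=
    prod_Icc_one_mem_Icc_exp hK (fun i hi hik ↦ ha i hi (by omega)) fun h ↦ hS k h hk
  have initial_sum_ge : -C ≤ ∑ k ∈ Finset.range n, b (k + 1) * ∏ j ∈ Finset.Icc 1 k, a j := by
    have coeff_le (k : ℕ) (hk : k < n) : ‖b (k + 1)‖ ≤ exp (γ * k + (γ + K)) := by
      have exponent_eq : γ * k + (γ + K) = γ * (k + 1 : ℕ) + K := by
        push_cast
        ring
      exact exponent_eq ▸ hb (k + 1) (by omega) hk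
    have prod_le (k : ℕ) (hk : k < n) :
        ‖∏ j ∈ Finset.Icc 1 k, a j‖ ≤ exp (-(k * β) + K) := by
      have h := prod_mem k hk.le
      exact (norm_of_nonneg ((exp_pos _).le.trans h.1)).trans_le h.2
    exact neg_le_of_abs_le (norm_sum_range_mul_le_of_norm_le_exp hγβ coeff_le prod_le)
  have last_term_gt := mul_exp_sub_lt_add_mul_mul min_pos (min_le_right δ 1)
    ((min_le_left δ 1).trans hz) (ha (n + 1) (by omega) le_rfl).le (by linarith)
    (prod_mem n le_rfl) hb_last hmax
  have threshold : x * (C + 2) ≤ min δ 1 * (x * exp L) := by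
    rw [mul_left_comm]
    gcongr
  linarith [le_mul_of_one_le_left C_nonneg hx]

/-- Deterministic pathwise lower bound from the proof of Theorem 5.1:
for `μ > 2ν > 0`, `K > 0` there is `L₀` such that for all `L ≥ L₀`, `x ≥ 1`, `n ≥ 0`,
positive `a₁,…,a_{n+1}`, reals `b̲₁,…,b̲_{n+1}`, and `z' > ν` satisfying the envelope
conditions (i)–(iv), one has
`∑_{k=0}^{n−1} b̲_{k+1} ∏_{j=1}^k a_j + (b̲_{n+1} + z' a_{n+1}) ∏_{j=1}^n a_j > x`. -/
theorem stmt13 (μ ν K : ℝ) (hν : 0 < ν) (hμν : 2 * ν < μ) (hK : 0 < K) :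
    ∃ L₀ : ℝ, ∀ L : ℝ, L₀ ≤ L → ∀ x : ℝ, 1 ≤ x → ∀ n : ℕ,
      ∀ a bb : ℕ → ℝ, ∀ z' : ℝ,
      (∀ i : ℕ, 1 ≤ i → i ≤ n + 1 → 0 < a i) →
      ν < z' →
      (∀ j : ℕ, 1 ≤ j → j ≤ n →
        (∑ i ∈ Finset.Icc 1 j, Real.log (a i)) ∈
          Set.Ioo (-(j * (μ + ν)) - K) (-(j * (μ - ν)) + K)) →
      (∀ j : ℕ, 1 ≤ j → j ≤ n → |bb j| ≤ Real.exp (ν * j + K)) →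
      -x * Real.exp (n * (μ - ν) - K) ≤ bb (n + 1) →
      x * Real.exp (n * (μ + ν) + L + K) < max (a (n + 1)) (bb (n + 1)) →
      x < (∑ k ∈ Finset.range n, bb (k + 1) * ∏ j ∈ Finset.Icc 1 k, a j)
          + (bb (n + 1) + z' * a (n + 1)) * ∏ j ∈ Finset.Icc 1 n, a j := by
  obtain ⟨L₀, h⟩ := stmt13_general (μ + ν) (μ - ν) ν ν K (by linarith) hν hK.le
  exact ⟨L₀, fun L hL x hx n a bb z' ha hz hS ↦ h L hL x hx n a bb z' ha hz.le
    fun j hj hjn ↦ Set.Ioo_subset_Icc_self (hS j hj hjn)⟩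
end

section
/- Let A be a positive random variable with E[log A] < 0 and E[|log A|^q] < ∞ for some integer q ≥ 2. Define V(x) = max(1, (log x)^q) for x > 0 and (PV)(x) = E[ V(A x + 1) ]. Then there exist constants c > 0, b < ∞ and K > 0 such that for all x > 0, (PV)(x) ≤ V(x) − c V(x)^{(q−1)/q} + b·1{x ≤ K}. -/
open MeasureTheory Filter Real

/-!
For fixed `a > 0` and `x → ∞`, write `log (a x + 1) = log x + log (a + 1 / x)`. The derivative of
`u ↦ u ^ q` at `1` then shows that the increment `V (a x + 1) - V x`, divided by
`V x ^ ((q - 1) / q) = (log x) ^ (q - 1)`, tends to `q log a`; the mean value inequality for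
`u ↦ u ^ q` dominates this quotient by `q (|log a| + 2) ^ q`. By dominated convergence
`(P V x - V x) / V x ^ ((q - 1) / q)` tends to `q 𝔼[log A] < 0`, which is the drift for large `x`.
For `x ≤ K`, monotonicity of `V` on `[1, ∞)` bounds `P V x` by `P V K`.
-/

open scoped Topology

lemma rpow_sub_rpow_le_mul_sub {p u v : ℝ} (hp : 1 ≤ p) (hu : 0 < u) (hv : 0 ≤ v) :
    u ^ p - v ^ p ≤ p * u ^ (p - 1) * (u - v) := by
  have bernoulli : 1 + p * (v / u - 1) ≤ (v / u) ^ p := by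
    have h : -1 ≤ v / u - 1 := by linarith [div_nonneg hv hu.le]
    simpa only [add_sub_cancel] using one_add_mul_self_le_rpow_one_add h hp
  rw [div_rpow hv hu.le, le_div_iff₀ (rpow_pos_of_pos hu p)] at bernoulli
  have hpow : u ^ p = u ^ (p - 1) * u := by rw [← rpow_add_one hu.ne', sub_add_cancel]
  have hcancel : (1 + p * (v / u - 1)) * u ^ p = u ^ p - p * u ^ (p - 1) * (u - v) := by
    rw [hpow]
    field_simp
    ring
  linarith

lemma abs_rpow_sub_rpow_le {p u v w : ℝ} (hp : 1 ≤ p) (hu : 0 < u) (hv : 0 < v)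
    (huw : u ≤ w) (hvw : v ≤ w) : |u ^ p - v ^ p| ≤ p * w ^ (p - 1) * |u - v| := by
  wlog hvu : v ≤ u generalizing u v
  · rw [abs_sub_comm, abs_sub_comm u]
    exact this hv hu hvw huw (le_of_not_ge hvu)
  rw [abs_of_nonneg (sub_nonneg.2 (rpow_le_rpow hv.le hvu (by linarith))),
    abs_of_nonneg (sub_nonneg.2 hvu)]
  calc u ^ p - v ^ p ≤ p * u ^ (p - 1) * (u - v) := rpow_sub_rpow_le_mul_sub hp hu hv.le
    _ ≤ p * w ^ (p - 1) * (u - v) := by gcongr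

lemma abs_max_one_add_rpow_sub_rpow_le {p s l M : ℝ} (hp : 1 ≤ p) (hs : 1 ≤ s)
    (hM : 1 + |l| ≤ M) : |max 1 (s + l) ^ p - s ^ p| ≤ s ^ (p - 1) * (p * M ^ p) := by
  have hl := abs_nonneg l
  have hMpos : 0 < M := by linarith
  have hdist : |max 1 (s + l) - s| ≤ |l| := by
    have h := abs_max_sub_max_le_abs (s + l) s 1
    rwa [max_comm _ 1, max_eq_left hs, add_sub_cancel_left] at h
  have hsum : s + |l| ≤ s * M := by nlinarith
  have hmax : max 1 (s + l) ≤ s * M := by linarith [(abs_le.1 hdist).2]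
  calc |max 1 (s + l) ^ p - s ^ p|
      ≤ p * (s * M) ^ (p - 1) * |max 1 (s + l) - s| :=
        abs_rpow_sub_rpow_le hp (by positivity) (by linarith) hmax (by linarith)
    _ ≤ p * (s * M) ^ (p - 1) * M := by
        gcongr
        linarith
    _ = s ^ (p - 1) * (p * M ^ p) := by
        rw [mul_rpow (by linarith) hMpos.le, rpow_sub_one hMpos.ne']
        field_simp

lemma abs_log_add_le {a d : ℝ} (ha : 0 < a) (hd : 0 ≤ d) : |log (a + d)| ≤ |log a| + d := by
  refine abs_le.2 ⟨?_, ?_⟩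
  · linarith [log_le_log ha (le_add_of_nonneg_right hd), neg_abs_le (log a)]
  · rcases le_total a 1 with ha1 | ha1
    · linarith [log_le_sub_one_of_pos (add_pos_of_pos_of_nonneg ha hd), abs_nonneg (log a)]
    · have hfactor : a + d = a * (1 + d / a) := by field_simp
      have hlog : log (1 + d / a) ≤ d / a := by
        linarith [log_le_sub_one_of_pos (by positivity : 0 < 1 + d / a)]
      rw [hfactor, log_mul ha.ne' (by positivity)]
      linarith [div_le_self hd ha1, le_abs_self (log a)]

lemma log_mul_add_one {a x : ℝ} (ha : 0 < a) (hx : 0 < x) :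
    log (a * x + 1) = log x + log (a + x⁻¹) := by
  rw [← log_mul hx.ne' (by positivity)]
  congr 1
  field_simp

/-- The Lyapunov function `x ↦ max 1 ((log x) ^ q)` of the chain `Z ↦ A Z + 1`, for a real exponent
`q`. If `q` is not an integer, its values on `(0, 1)` depend on Mathlib's convention for powers of
negative numbers; only the lower bound `1` is used there. -/
noncomputable def logLyapunov (q x : ℝ) : ℝ := max 1 (log x ^ q)

section LogLyapunov

variable {q x y : ℝ}

lemma one_le_logLyapunov (q x : ℝ) : 1 ≤ logLyapunov q x := le_max_left _ _

lemma measurable_logLyapunov (q : ℝ) : Measurable (logLyapunov q) :=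
  measurable_const.max (measurable_log.pow_const q)

lemma logLyapunov_eq_max_rpow (hq : 0 ≤ q) (hx : 1 ≤ x) :
    logLyapunov q x = max 1 (log x) ^ q := by
  have hlog := log_nonneg hx
  rcases le_total (log x) 1 with h | h
  · rw [logLyapunov, max_eq_left h, max_eq_left (rpow_le_one hlog h hq), one_rpow]
  · rw [logLyapunov, max_eq_right h, max_eq_right (one_le_rpow h hq)]

lemma logLyapunov_of_one_le_log (hq : 0 ≤ q) (hx : 1 ≤ log x) :
    logLyapunov q x = log x ^ q :=
  max_eq_right (one_le_rpow hx hq)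

lemma logLyapunov_rpow_of_one_le_log (hq : 0 < q) (hx : 1 ≤ log x) :
    logLyapunov q x ^ ((q - 1) / q) = log x ^ (q - 1) := by
  rw [logLyapunov_of_one_le_log hq.le hx, ← rpow_mul (by linarith), mul_div_cancel₀ _ hq.ne']

lemma logLyapunov_rpow_le_self (hq : 0 < q) :
    logLyapunov q x ^ ((q - 1) / q) ≤ logLyapunov q x := by
  have hexp : (q - 1) / q ≤ 1 := (div_le_one hq).2 (by linarith)
  simpa only [rpow_one] using rpow_le_rpow_of_exponent_le (one_le_logLyapunov q x) hexp

lemma logLyapunov_le_logLyapunov (hq : 0 ≤ q) (hx : 1 ≤ x) (hxy : x ≤ y) :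
    logLyapunov q x ≤ logLyapunov q y := by
  have hlog : log x ≤ log y := log_le_log (by linarith) hxy
  exact max_le_max le_rfl (rpow_le_rpow (log_nonneg hx) hlog hq)

end LogLyapunov

/-- The increment of the Lyapunov function under the step `x ↦ a x + 1`, measured in units of the
rate `V ^ ((q - 1) / q)` in the drift condition. -/
noncomputable def normalizedIncrement (q a x : ℝ) : ℝ :=
  (logLyapunov q (a * x + 1) - logLyapunov q x) / logLyapunov q x ^ ((q - 1) / q)

section NormalizedIncrement

variable {q a x : ℝ}

lemma logLyapunov_mul_add_one (q a x : ℝ) :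
    logLyapunov q (a * x + 1) =
      logLyapunov q x + logLyapunov q x ^ ((q - 1) / q) * normalizedIncrement q a x := by
  have hpos : 0 < logLyapunov q x ^ ((q - 1) / q) :=
    rpow_pos_of_pos (zero_lt_one.trans_le (one_le_logLyapunov q x)) _
  rw [normalizedIncrement, mul_div_cancel₀ _ hpos.ne', add_sub_cancel]

lemma measurable_normalizedIncrement (q x : ℝ) :
    Measurable fun a => normalizedIncrement q a x :=
  (((measurable_logLyapunov q).comp (by fun_prop)).sub_const _).div_const _

lemma abs_normalizedIncrement_le (hq : 1 ≤ q) (ha : 0 < a) (hx0 : 0 < x) (hx : 1 ≤ log x) :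
    |normalizedIncrement q a x| ≤ q * (|log a| + 2) ^ q := by
  have hq0 : 0 < q := by linarith
  have hx1 : 1 ≤ x := (log_nonneg_iff hx0).1 (by linarith)
  have hl : |log (a + x⁻¹)| ≤ |log a| + 1 :=
    (abs_log_add_le ha (by positivity)).trans (by gcongr; exact inv_le_one_of_one_le₀ hx1)
  have hspos : 0 < log x ^ (q - 1) := rpow_pos_of_pos (by linarith) _
  rw [normalizedIncrement, logLyapunov_rpow_of_one_le_log hq0 hx,
    logLyapunov_eq_max_rpow hq0.le (le_add_of_nonneg_left (by positivity)),
    log_mul_add_one ha hx0, logLyapunov_of_one_le_log hq0.le hx, abs_div, abs_of_pos hspos,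
    div_le_iff₀' hspos]
  exact abs_max_one_add_rpow_sub_rpow_le hq hx (by linarith)

lemma normalizedIncrement_eq_mul_sub (hq : 0 < q) (ha : 0 < a) (hx0 : 0 < x) (hx : 1 ≤ log x)
    (hax : 1 ≤ log (a * x + 1)) :
    normalizedIncrement q a x =
      log x * ((1 + log (a + x⁻¹) / log x) ^ q - 1 ^ q) := by
  have hlog : 0 < log x := by linarith
  have hsplit : log (a * x + 1) = log x * (1 + log (a + x⁻¹) / log x) := by
    rw [log_mul_add_one ha hx0]
    field_simp
  have hnonneg : 0 ≤ 1 + log (a + x⁻¹) / log x :=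
    (pos_of_mul_pos_right (by linarith) hlog.le).le
  rw [normalizedIncrement, logLyapunov_rpow_of_one_le_log hq hx,
    logLyapunov_of_one_le_log hq.le hax, logLyapunov_of_one_le_log hq.le hx, hsplit,
    mul_rpow hlog.le hnonneg, rpow_sub_one hlog.ne', one_rpow]
  field_simp

lemma tendsto_normalizedIncrement (hq : 0 < q) (ha : 0 < a) :
    Tendsto (normalizedIncrement q a) atTop (𝓝 (q * log a)) := by
  have hl : Tendsto (fun x : ℝ => log (a + x⁻¹)) atTop (𝓝 (log a)) := by
    have h : Tendsto (fun x : ℝ => a + x⁻¹) atTop (𝓝 a) := by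
      simpa only [add_zero] using tendsto_inv_atTop_zero.const_add a
    exact h.log ha.ne'
  have hratio : Tendsto (fun x => log (a + x⁻¹) / log x) atTop (𝓝 0) :=
    hl.div_atTop tendsto_log_atTop
  have hprod : Tendsto (fun x => log x • (log (a + x⁻¹) / log x)) atTop (𝓝 (log a)) := by
    refine hl.congr' ?_
    filter_upwards [tendsto_log_atTop.eventually_ge_atTop 1] with x hx
    rw [smul_eq_mul, mul_div_cancel₀ _ (by linarith)]
  have hderiv : HasDerivAt (fun u : ℝ => u ^ q) q 1 := by
    simpa only [one_rpow, mul_one] using hasDerivAt_rpow_const (p := q) (Or.inl one_ne_zero)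
  have hlim := hderiv.hasDerivWithinAt.hasFDerivWithinAt.lim hratio
    (Eventually.of_forall fun _ => Set.mem_univ _) hprod
  have hstep : Tendsto (fun x => log (a * x + 1)) atTop atTop :=
    tendsto_log_atTop.comp (tendsto_atTop_add_const_right _ 1 (tendsto_id.const_mul_atTop ha))
  rw [mul_comm q]
  refine Tendsto.congr' ?_ hlim
  filter_upwards [eventually_gt_atTop 0, tendsto_log_atTop.eventually_ge_atTop 1,
    hstep.eventually_ge_atTop 1] with x hx0 hx hax
  exact (normalizedIncrement_eq_mul_sub hq ha hx0 hx hax).symm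

end NormalizedIncrement

section Expectation

variable {Ω : Type*} [MeasurableSpace Ω] {μ : Measure Ω}

lemma integrable_abs_add_const_rpow [IsFiniteMeasure μ] {f : Ω → ℝ} {p M : ℝ} (hp : 0 < p)
    (hM : 0 ≤ M) (hf : AEStronglyMeasurable f μ) (hint : Integrable (fun ω => |f ω| ^ p) μ) :
    Integrable (fun ω => (|f ω| + M) ^ p) μ := by
  have hp0 : ENNReal.ofReal p ≠ 0 := by simpa using hp
  have hmem : MemLp f (ENNReal.ofReal p) μ := by
    rw [← integrable_norm_rpow_iff hf hp0 ENNReal.ofReal_ne_top, ENNReal.toReal_ofReal hp.le]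
    exact hint
  have h := (hmem.abs.add (memLp_const M)).integrable_norm_rpow hp0 ENNReal.ofReal_ne_top
  rw [ENNReal.toReal_ofReal hp.le] at h
  refine h.congr (Eventually.of_forall fun ω => ?_)
  have hnonneg : 0 ≤ |f ω| + M := by positivity
  simp only [Pi.add_apply, Pi.abs_apply, Real.norm_eq_abs, abs_of_nonneg hnonneg]

variable {A : Ω → ℝ} {q : ℝ}

lemma integrable_normalizedIncrement [IsFiniteMeasure μ] (hA : AEMeasurable A μ)
    (hpos : ∀ᵐ ω ∂μ, 0 < A ω) (hq : 1 ≤ q) (hmom : Integrable (fun ω => |log (A ω)| ^ q) μ)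
    {x : ℝ} (hx0 : 0 < x) (hx : 1 ≤ log x) :
    Integrable (fun ω => normalizedIncrement q (A ω) x) μ := by
  refine Integrable.mono' ((integrable_abs_add_const_rpow (by linarith) zero_le_two
    hA.log.aestronglyMeasurable hmom).const_mul q)
    ((measurable_normalizedIncrement q x).comp_aemeasurable hA).aestronglyMeasurable ?_
  filter_upwards [hpos] with ω hω
  exact abs_normalizedIncrement_le hq hω hx0 hx

lemma tendsto_integral_normalizedIncrement [IsFiniteMeasure μ] (hA : AEMeasurable A μ)
    (hpos : ∀ᵐ ω ∂μ, 0 < A ω) (hq : 1 ≤ q) (hmom : Integrable (fun ω => |log (A ω)| ^ q) μ) :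
    Tendsto (fun x => ∫ ω, normalizedIncrement q (A ω) x ∂μ) atTop
      (𝓝 (q * ∫ ω, log (A ω) ∂μ)) := by
  rw [← integral_const_mul]
  refine tendsto_integral_filter_of_dominated_convergence (fun ω => q * (|log (A ω)| + 2) ^ q)
    (Eventually.of_forall fun x =>
      ((measurable_normalizedIncrement q x).comp_aemeasurable hA).aestronglyMeasurable) ?_
    ((integrable_abs_add_const_rpow (by linarith) zero_le_two
      hA.log.aestronglyMeasurable hmom).const_mul q) ?_
  · filter_upwards [eventually_gt_atTop 0, tendsto_log_atTop.eventually_ge_atTop 1] with x hx0 hx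
    filter_upwards [hpos] with ω hω
    exact abs_normalizedIncrement_le hq hω hx0 hx
  · filter_upwards [hpos] with ω hω
    exact tendsto_normalizedIncrement (by linarith) hω

lemma integrable_logLyapunov_mul_add_one [IsFiniteMeasure μ] {x : ℝ}
    (hint : Integrable (fun ω => normalizedIncrement q (A ω) x) μ) :
    Integrable (fun ω => logLyapunov q (A ω * x + 1)) μ := by
  simp only [logLyapunov_mul_add_one]
  exact (integrable_const _).add (hint.const_mul _)

lemma integral_logLyapunov_mul_add_one [IsProbabilityMeasure μ] {x : ℝ}
    (hint : Integrable (fun ω => normalizedIncrement q (A ω) x) μ) :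
    ∫ ω, logLyapunov q (A ω * x + 1) ∂μ = logLyapunov q x +
      logLyapunov q x ^ ((q - 1) / q) * ∫ ω, normalizedIncrement q (A ω) x ∂μ := by
  simp only [logLyapunov_mul_add_one]
  rw [integral_add (integrable_const _) (hint.const_mul _), integral_const_mul, integral_const,
    probReal_univ, one_smul]

lemma integral_logLyapunov_mul_add_one_mono (hpos : ∀ᵐ ω ∂μ, 0 < A ω) (hq : 0 ≤ q) {x y : ℝ}
    (hx : 0 ≤ x) (hxy : x ≤ y) (hint : Integrable (fun ω => logLyapunov q (A ω * y + 1)) μ) :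
    ∫ ω, logLyapunov q (A ω * x + 1) ∂μ ≤ ∫ ω, logLyapunov q (A ω * y + 1) ∂μ := by
  refine integral_mono_of_nonneg
    (Eventually.of_forall fun ω => zero_le_one.trans (one_le_logLyapunov q _)) hint ?_
  filter_upwards [hpos] with ω hω
  exact logLyapunov_le_logLyapunov hq (le_add_of_nonneg_left (by positivity)) (by gcongr)

end Expectation

theorem stmt14_general {Ω : Type*} [MeasurableSpace Ω] {μ : Measure Ω} [IsProbabilityMeasure μ]
    {A : Ω → ℝ} (hA : AEMeasurable A μ) (hpos : ∀ᵐ ω ∂μ, 0 < A ω) {q : ℝ} (hq : 1 ≤ q)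
    (hmom : Integrable (fun ω => |log (A ω)| ^ q) μ) (hlog : ∫ ω, log (A ω) ∂μ < 0) :
    ∃ c : ℝ, 0 < c ∧ ∃ b K : ℝ, 0 < K ∧ ∀ x : ℝ, 0 < x →
      ∫ ω, logLyapunov q (A ω * x + 1) ∂μ ≤
        logLyapunov q x - c * logLyapunov q x ^ ((q - 1) / q) + (if x ≤ K then b else 0) := by
  have hq0 : 0 < q := by linarith
  obtain ⟨c, hc0, hc⟩ : ∃ c, 0 < c ∧ c < min 1 (-(q * ∫ ω, log (A ω) ∂μ)) :=
    exists_between (lt_min one_pos (by linarith [mul_neg_of_pos_of_neg hq0 hlog]))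
  obtain ⟨hc1, hcdrift⟩ := lt_min_iff.1 hc
  have hdrift := (tendsto_integral_normalizedIncrement hA hpos hq hmom).eventually_lt_const
    (lt_neg_of_lt_neg hcdrift)
  obtain ⟨K, hK⟩ := (hdrift.and ((eventually_gt_atTop 0).and
    (tendsto_log_atTop.eventually_ge_atTop 1))).exists_forall_of_atTop
  have hint (x : ℝ) (hx : K ≤ x) : Integrable (fun ω => normalizedIncrement q (A ω) x) μ :=
    integrable_normalizedIncrement hA hpos hq hmom (hK x hx).2.1 (hK x hx).2.2
  refine ⟨c, hc0, ∫ ω, logLyapunov q (A ω * K + 1) ∂μ, K, (hK K le_rfl).2.1,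
    fun x hx => ?_⟩
  have hrate : 0 ≤ logLyapunov q x ^ ((q - 1) / q) :=
    rpow_nonneg (zero_le_one.trans (one_le_logLyapunov q x)) _
  split_ifs with hxK
  · have hmono := integral_logLyapunov_mul_add_one_mono hpos hq0.le hx.le hxK
      (integrable_logLyapunov_mul_add_one (hint K le_rfl))
    linarith [mul_le_of_le_one_left hrate hc1.le, logLyapunov_rpow_le_self (x := x) hq0]
  · have hKx : K ≤ x := (not_le.1 hxK).le
    rw [integral_logLyapunov_mul_add_one (hint x hKx)]
    linarith [mul_le_mul_of_nonneg_left (hK x hKx).1.le hrate]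

/-- Lyapunov drift condition (Section 6 of the paper): if `A > 0`
a.s., `E[log A] < 0` and `E[|log A|^q] < ∞` for an integer `q ≥ 2`, then with
`V(x) = max 1 ((log x)^q)` and `(PV)(x) = E[V(A x + 1)]` there are constants
`c > 0`, `b` and `K > 0` such that `(PV)(x) ≤ V(x) − c V(x)^{(q−1)/q} + b 1{x ≤ K}`
for all `x > 0`. -/
theorem stmt14 {Ω : Type*} [MeasurableSpace Ω] (μ : Measure Ω) [IsProbabilityMeasure μ]
    (A : Ω → ℝ) (hAmeas : Measurable A) (hApos : ∀ᵐ ω ∂μ, 0 < A ω)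
    (q : ℕ) (hq : 2 ≤ q)
    (hmom : Integrable (fun ω => |Real.log (A ω)| ^ q) μ)
    (hEA : (∫ ω, Real.log (A ω) ∂μ) < 0)
    (V : ℝ → ℝ) (hV : ∀ x, V x = max 1 (Real.log x ^ q)) :
    ∃ c : ℝ, 0 < c ∧ ∃ b K : ℝ, 0 < K ∧ ∀ x : ℝ, 0 < x →
      (∫ ω, V (A ω * x + 1) ∂μ) ≤
        V x - c * V x ^ ((q - 1 : ℝ) / q) + (if x ≤ K then b else 0) := by
  obtain rfl : V = logLyapunov q := funext fun x => by rw [hV, logLyapunov, rpow_natCast]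
  exact stmt14_general hAmeas.aemeasurable hApos (by exact_mod_cast one_le_two.trans hq)
    (by simpa only [rpow_natCast] using hmom) hEA
end
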